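/- arXiv:2203.14534 — 5 statements merged into one kernel-verified Lean document; each statement's English description precedes it below -/
import Mathlib

section
/- Let $G$ be a finite group of order $N$, let $p$ be a prime, and let $b_0 < b_1 < \cdots < b_r$ be nonnegative integers such that $p^{b_r}$ divides $N$. Let $P_{b_0}$ be a fixed subgroup of $G$ of order $p^{b_0}$. Then the number of ordered tuples $(P_{b_1}, P_{b_2}, \ldots, P_{b_r})$ of subgroups of $G$ such that $|P_{b_i}| = p^{b_i}$ for each $i$ and $P_{b_0} \subseteq P_{b_1} \subseteq \cdots \subseteq P_{b_r}$ is congruent to $1$ modulo $p$. -/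
/-!
Chains can be built one subgroup at a time, so it suffices that a subgroup `H` of order `p ^ a` lies
in `1` mod `p` subgroups of order `p ^ (a + d)` when `p ^ (a + d)` divides `|G|`. These subgroups
correspond to the blocks of size `p ^ d` of `G ⧸ H` containing the base point. Following Wielandt,
consider all subsets `T` of `G ⧸ H` of size `p ^ d` containing the base point and group them by
`G`-orbit. Counting the `g` for which `g • T` contains the base point in two ways, the class of `T`
has `p ^ (a + d) / |stabilizer of T|` members, a power of `p`, and it is a singleton exactly when
`T` is a block. Hence, mod `p`, there are as many blocks as subsets, namely
`(p ^ d * m - 1).choose (p ^ d - 1)`, which is `1` mod `p` by Lucas' theorem.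
-/

open MulAction Set
open scoped Pointwise

theorem choose_mul_add_pred_modEq (p : ℕ) [hp : Fact p.Prime] (a b : ℕ) :
    (p * a + (p - 1)).choose (p * b + (p - 1)) ≡ a.choose b [MOD p] := by
  have pred_lt : p - 1 < p := Nat.sub_one_lt hp.out.ne_zero
  have lucas := Choose.choose_modEq_choose_mod_mul_choose_div_nat
    (p := p) (n := p * a + (p - 1)) (k := p * b + (p - 1))
  simpa [Nat.mul_add_mod, Nat.mod_eq_of_lt pred_lt, Nat.mul_add_div hp.out.pos,
    Nat.div_eq_of_lt pred_lt] using lucas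

theorem choose_pred_pow_mul_pred_pow_modEq_one (p : ℕ) [hp : Fact p.Prime] (d : ℕ) {m : ℕ}
    (hm : 0 < m) : (p ^ d * m - 1).choose (p ^ d - 1) ≡ 1 [MOD p] := by
  induction d with
  | zero => simp [Nat.ModEq.refl]
  | succ d ih =>
    have digits {k : ℕ} (hk : 0 < k) : p * k - 1 = p * (k - 1) + (p - 1) := by
      obtain ⟨j, rfl⟩ := Nat.exists_eq_succ_of_ne_zero hk.ne'
      rw [Nat.succ_eq_add_one, mul_add_one, Nat.add_sub_assoc hp.out.one_le, Nat.add_sub_cancel]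
    have pow_pos : 0 < p ^ d := Nat.pow_pos hp.out.pos
    rw [pow_succ', mul_assoc, digits (Nat.mul_pos pow_pos hm), digits pow_pos]
    exact (choose_mul_add_pred_modEq p _ _).trans ih

theorem ncard_sets_mem_of_ncard_eq_succ {X : Type*} [Finite X] (a : X) (k : ℕ) :
    {T : Set X | a ∈ T ∧ T.ncard = k + 1}.ncard = (Nat.card X - 1).choose k := by
  have image_eq : {T : Set X | a ∈ T ∧ T.ncard = k + 1} =
      insert a '' {T ⊆ ({a}ᶜ : Set X) | T.ncard = k} := by
    ext T
    constructor
    · rintro ⟨ha, hT⟩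
      refine ⟨T \ {a}, ⟨sdiff_subset_compl _ _, ?_⟩, by simp [ha]⟩
      rw [ncard_sdiff_singleton_of_mem ha, hT, Nat.add_sub_cancel]
    · rintro ⟨T, ⟨hT, rfl⟩, rfl⟩
      exact ⟨mem_insert a T, ncard_insert_of_notMem (by simpa using hT)⟩
  have inj : InjOn (insert a) {T ⊆ ({a}ᶜ : Set X) | T.ncard = k} := by
    rintro T ⟨hT, -⟩ T' ⟨hT', -⟩ h
    rw [subset_compl_singleton_iff] at hT hT'
    rw [← insert_sdiff_self_of_notMem hT, h, insert_sdiff_self_of_notMem hT']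
  rw [image_eq, inj.ncard_image, ncard_powerset_ncard (toFinite _), ncard_compl,
    ncard_singleton]

theorem ncard_modEq_ncard_of_fiber {α β ι : Type*} [Finite α] [Finite β] {n : ℕ}
    {S : Set α} {T : Set β} (f : α → ι) (g : β → ι)
    (h : ∀ i, {x ∈ S | f x = i}.ncard ≡ {y ∈ T | g y = i}.ncard [MOD n]) :
    S.ncard ≡ T.ncard [MOD n] := by
  classical
  have := Fintype.ofFinite α
  have := Fintype.ofFinite β
  have hf : MapsTo f S.toFinset (S.toFinset.image f ∪ T.toFinset.image g : Finset ι) :=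
    fun x hx ↦ Finset.mem_union_left _ (Finset.mem_image_of_mem f hx)
  have hg : MapsTo g T.toFinset (S.toFinset.image f ∪ T.toFinset.image g : Finset ι) :=
    fun y hy ↦ Finset.mem_union_right _ (Finset.mem_image_of_mem g hy)
  rw [ncard_eq_toFinset_card', ncard_eq_toFinset_card', Finset.card_eq_sum_card_fiberwise hf,
    Finset.card_eq_sum_card_fiberwise hg]
  refine Nat.ModEq.sum fun i _ ↦ ?_
  simpa only [← ncard_coe_finset, Finset.coe_filter, mem_toFinset] using h i

theorem ncard_modEq_ncard_of_mapsTo {α β : Type*} [Finite α] [Finite β] {n : ℕ}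
    {S : Set α} {T : Set β} {f : α → β} (hf : MapsTo f S T)
    (h : ∀ y ∈ T, {x ∈ S | f x = y}.ncard ≡ 1 [MOD n]) : S.ncard ≡ T.ncard [MOD n] := by
  refine ncard_modEq_ncard_of_fiber f id fun y ↦ ?_
  by_cases hy : y ∈ T
  · have fiber_id : {z ∈ T | id z = y} = {y} := by
      ext z
      exact ⟨fun hz ↦ hz.2, fun hz ↦ ⟨hz ▸ hy, hz⟩⟩
    rw [fiber_id, ncard_singleton]
    exact h y hy
  · have fiber_f : {x ∈ S | f x = y} = ∅ :=
      eq_empty_of_forall_notMem fun x hx ↦ hy (hx.2 ▸ hf hx.1)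
    have fiber_id : {z ∈ T | id z = y} = ∅ :=
      eq_empty_of_forall_notMem fun z hz ↦ hy (hz.2 ▸ hz.1)
    rw [fiber_f, fiber_id, ncard_empty, ncard_empty]

section TransitiveActions

variable {G X : Type*} [Group G] [MulAction G X]

theorem ncard_smul_mem (x : X) (S : Set X) :
    {g : G | g • x ∈ S}.ncard = (orbit G x ∩ S).ncard * Nat.card (stabilizer G x) := by
  have preimage_eq : {g : G | g • x ∈ S} =
      QuotientGroup.mk ⁻¹' (ofQuotientStabilizer G x ⁻¹' (orbit G x ∩ S)) := by
    ext g
    simp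
  have subset_range : orbit G x ∩ S ⊆ range (ofQuotientStabilizer G x) := by
    rintro _ ⟨⟨g, rfl⟩, -⟩
    exact ⟨g, rfl⟩
  rw [preimage_eq, ← Nat.card_coe_set_eq, QuotientGroup.card_preimage_mk, mul_comm,
    Nat.card_coe_set_eq,
    ncard_preimage_of_injective_subset_range (injective_ofQuotientStabilizer G x) subset_range]

theorem ncard_translates_mem_mul_card_stabilizer [IsPretransitive G X] (a : X) (T : Set X) :
    (orbit G T ∩ {T' | a ∈ T'}).ncard * Nat.card (stabilizer G T)
      = T.ncard * Nat.card (stabilizer G a) := by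
  have inv_image : {g : G | g • T ∈ {T' : Set X | a ∈ T'}} = {g : G | g • a ∈ T}⁻¹ := by
    ext g
    simp [mem_smul_set_iff_inv_smul_mem]
  rw [← ncard_smul_mem, inv_image, ncard_inv, ncard_smul_mem, orbit_eq_univ, univ_inter]

theorem isBlock_iff_translates_mem_eq_singleton [IsPretransitive G X] {a : X} {B : Set X}
    (ha : a ∈ B) : IsBlock G B ↔ orbit G B ∩ {T | a ∈ T} = {B} := by
  constructor
  · intro hB
    refine Subset.antisymm ?_ (singleton_subset_iff.2 ⟨mem_orbit_self B, ha⟩)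
    rintro _ ⟨⟨g, rfl⟩, hg⟩
    exact hB.smul_eq_of_nonempty ⟨a, hg, ha⟩
  · intro h
    have smul_eq {g : G} (hg : a ∈ g • B) : g • B = B := h.subset ⟨mem_orbit B g, hg⟩
    refine isBlock_iff_smul_eq_of_mem.2 fun g x hx hgx ↦ ?_
    obtain ⟨k, rfl⟩ := exists_smul_eq G (g • x) a
    have hk : k • B = B := smul_eq (smul_mem_smul_set hgx)
    have hkg : (k * g) • B = B := smul_eq ⟨x, hx, mul_smul k g x⟩
    exact smul_left_cancel k (by rw [← mul_smul, hkg, hk])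

theorem dvd_ncard_translates_mem_of_not_isBlock [IsPretransitive G X] {p n : ℕ} (hp : p.Prime)
    {a : X} {T : Set X} (ha : a ∈ T) (hT : ¬ IsBlock G T)
    (hcard : T.ncard * Nat.card (stabilizer G a) = p ^ n) :
    p ∣ (orbit G T ∩ {T' | a ∈ T'}).ncard := by
  have dvd_pow : (orbit G T ∩ {T' | a ∈ T'}).ncard ∣ p ^ n :=
    ⟨_, by rw [ncard_translates_mem_mul_card_stabilizer, hcard]⟩
  obtain ⟨k, -, hk⟩ := (Nat.dvd_prime_pow hp).1 dvd_pow
  have k_ne_zero : k ≠ 0 := by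
    rintro rfl
    obtain ⟨B, hB⟩ := ncard_eq_one.1 (hk.trans (pow_zero p))
    obtain rfl : T = B := hB.subset ⟨mem_orbit_self T, ha⟩
    exact hT ((isBlock_iff_translates_mem_eq_singleton ha).2 hB)
  exact hk ▸ dvd_pow_self p k_ne_zero

theorem ncard_sets_mem_modEq_ncard_blocks_mem [Finite X] [IsPretransitive G X] {p n k : ℕ}
    (hp : p.Prime) {a : X} (hcard : k * Nat.card (stabilizer G a) = p ^ n) :
    {T : Set X | a ∈ T ∧ T.ncard = k}.ncard
      ≡ {B : Set X | (a ∈ B ∧ B.ncard = k) ∧ IsBlock G B}.ncard [MOD p] := by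
  refine ncard_modEq_ncard_of_fiber (orbit G) (orbit G) fun ω ↦ ?_
  by_cases all_blocks : ∀ T : Set X, a ∈ T → T.ncard = k → orbit G T = ω → IsBlock G T
  · have fibers_eq : {T ∈ {T : Set X | a ∈ T ∧ T.ncard = k} | orbit G T = ω} =
        {B ∈ {B : Set X | (a ∈ B ∧ B.ncard = k) ∧ IsBlock G B} | orbit G B = ω} := by
      ext T
      exact ⟨fun h ↦ ⟨⟨h.1, all_blocks T h.1.1 h.1.2 h.2⟩, h.2⟩, fun h ↦ ⟨h.1.1, h.2⟩⟩
    rw [fibers_eq]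
  push Not at all_blocks
  obtain ⟨T, ha, rfl, rfl, hT⟩ := all_blocks
  have fiber_eq : {T' ∈ {T' : Set X | a ∈ T' ∧ T'.ncard = T.ncard} | orbit G T' = orbit G T} =
      orbit G T ∩ {T' | a ∈ T'} := by
    ext T'
    simp only [orbit_eq_iff]
    constructor
    · exact fun h ↦ ⟨h.2, h.1.1⟩
    · rintro ⟨⟨g, rfl⟩, hg⟩
      exact ⟨⟨hg, ncard_smul_set g T⟩, mem_orbit T g⟩
  have block_fiber_eq : {B ∈ {B : Set X | (a ∈ B ∧ B.ncard = T.ncard) ∧ IsBlock G B} |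
      orbit G B = orbit G T} = ∅ := by
    refine eq_empty_of_forall_notMem fun B ⟨⟨_, hB⟩, horbit⟩ ↦ hT ?_
    obtain ⟨g, rfl⟩ := orbit_eq_iff.1 horbit.symm
    exact hB.translate g
  rw [fiber_eq, block_fiber_eq, ncard_empty]
  exact Nat.modEq_zero_iff_dvd.2 (dvd_ncard_translates_mem_of_not_isBlock hp ha hT hcard)

theorem ncard_blocks_mem_eq_ncard_subgroups [IsPretransitive G X] (a : X) (k : ℕ) :
    {B : Set X | (a ∈ B ∧ B.ncard = k) ∧ IsBlock G B}.ncard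
      = {K : Subgroup G | stabilizer G a ≤ K ∧ (stabilizer G a).relIndex K = k}.ncard := by
  refine ncard_congr (fun B _ ↦ stabilizer G B) ?_ ?_ ?_
  · rintro B ⟨⟨ha, rfl⟩, hB⟩
    exact ⟨hB.stabilizer_le ha, (hB.ncard_block_eq_relIndex ha).symm⟩
  · rintro B B' ⟨⟨ha, -⟩, hB⟩ ⟨⟨ha', -⟩, hB'⟩ h
    rw [← hB.orbit_stabilizer_eq ha, ← hB'.orbit_stabilizer_eq ha', h]
  · rintro K ⟨hK, rfl⟩
    have hB := IsBlock.of_orbit hK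
    have ha : a ∈ orbit K a := mem_orbit_self a
    refine ⟨orbit K a, ⟨⟨ha, ?_⟩, hB⟩, stabilizer_orbit_eq hK⟩
    rw [hB.ncard_block_eq_relIndex ha, stabilizer_orbit_eq hK]

theorem ncard_blocks_mem_modEq_one [Finite X] [IsPretransitive G X] {p d e : ℕ}
    [hp : Fact p.Prime] {a : X} (ha : Nat.card (stabilizer G a) = p ^ e)
    (hdvd : p ^ d ∣ Nat.card X) :
    {B : Set X | (a ∈ B ∧ B.ncard = p ^ d) ∧ IsBlock G B}.ncard ≡ 1 [MOD p] := by
  obtain ⟨m, hm⟩ := hdvd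
  have : Nonempty X := ⟨a⟩
  have m_pos : 0 < m := pos_of_mul_pos_right (hm ▸ Nat.card_pos) (Nat.zero_le _)
  have hcard : p ^ d * Nat.card (stabilizer G a) = p ^ (d + e) := by rw [ha, pow_add]
  refine (ncard_sets_mem_modEq_ncard_blocks_mem hp.out hcard).symm.trans ?_
  rw [← Nat.sub_add_cancel (Nat.pow_pos (n := d) hp.out.pos), ncard_sets_mem_of_ncard_eq_succ, hm]
  exact choose_pred_pow_mul_pred_pow_modEq_one p d m_pos

end TransitiveActions

section Subgroups

variable {G : Type*} [Group G]

theorem card_mul_relIndex {H K : Subgroup G} (hHK : H ≤ K) :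
    Nat.card H * H.relIndex K = Nat.card K := by
  rw [← Subgroup.relIndex_bot_left, Subgroup.relIndex_mul_relIndex _ _ _ bot_le hHK,
    Subgroup.relIndex_bot_left]

theorem ncard_subgroups_ge_modEq_one [Finite G] {p : ℕ} [hp : Fact p.Prime] {H : Subgroup G}
    {a n : ℕ} (hH : Nat.card H = p ^ a) (han : a ≤ n) (hdvd : p ^ n ∣ Nat.card G) :
    {K : Subgroup G | Nat.card K = p ^ n ∧ H ≤ K}.ncard ≡ 1 [MOD p] := by
  obtain ⟨d, rfl⟩ := Nat.exists_eq_add_of_le han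
  have pow_pos : 0 < p ^ a := Nat.pow_pos hp.out.pos
  have card_iff {K : Subgroup G} (hHK : H ≤ K) :
      Nat.card K = p ^ (a + d) ↔ H.relIndex K = p ^ d := by
    rw [← card_mul_relIndex hHK, hH, pow_add, Nat.mul_right_inj pow_pos.ne']
  have dvd_index : p ^ d ∣ Nat.card (G ⧸ H) := by
    rwa [← Subgroup.card_mul_index H, hH, pow_add, Nat.mul_dvd_mul_iff_left pow_pos] at hdvd
  have hstab : stabilizer G ((1 : G) : G ⧸ H) = H := stabilizer_quotient H
  have subgroups_eq : {K : Subgroup G | Nat.card K = p ^ (a + d) ∧ H ≤ K} =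
      {K | H ≤ K ∧ H.relIndex K = p ^ d} := by
    ext K
    exact ⟨fun h ↦ ⟨h.2, (card_iff h.2).1 h.1⟩, fun h ↦ ⟨(card_iff h.1).2 h.2, h.1⟩⟩
  have blocks_eq := ncard_blocks_mem_eq_ncard_subgroups (G := G) ((1 : G) : G ⧸ H) (p ^ d)
  rw [hstab] at blocks_eq
  rw [subgroups_eq, ← blocks_eq]
  exact ncard_blocks_mem_modEq_one (hstab.symm ▸ hH) dvd_index

end Subgroups

section Chains

variable {α : Type*} [Preorder α] {r : ℕ}

/-- The weakly increasing sequences above `x` whose `i`-th term lies in `level i`. The point `x`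
itself is not part of the sequence. -/
def chainsAbove (level : Fin r → Set α) (x : α) : Set (Fin r → α) :=
  {c | Monotone c ∧ (∀ i, c i ∈ level i) ∧ ∀ i, x ≤ c i}

theorem monotone_fin_cons {x : α} {c : Fin r → α} :
    Monotone (Fin.cons x c : Fin (r + 1) → α) ↔ (∀ i, x ≤ c i) ∧ Monotone c := by
  simpa only [monotone_iff_forall_lt] using! Fin.liftFun_cons (· ≤ ·) (a := x) (f := c)

theorem cons_mem_chainsAbove {level : Fin (r + 1) → Set α} {x y : α} {c : Fin r → α} :
    Fin.cons y c ∈ chainsAbove level x ↔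
      (y ∈ level 0 ∧ x ≤ y) ∧ c ∈ chainsAbove (fun i ↦ level i.succ) y := by
  have le_trans_all : x ≤ y → (∀ i, y ≤ c i) → ∀ i, x ≤ c i := fun hxy hyc i ↦ hxy.trans (hyc i)
  simp only [chainsAbove, mem_ofPred_eq, monotone_fin_cons, Fin.forall_fin_succ, Fin.cons_zero,
    Fin.cons_succ]
  tauto

theorem chainsAbove_fiber {level : Fin (r + 1) → Set α} {x y : α} (hy : y ∈ level 0)
    (hxy : x ≤ y) : {c ∈ chainsAbove level x | c 0 = y} =
      Fin.cons y '' chainsAbove (fun i ↦ level i.succ) y := by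
  ext c
  constructor
  · rintro ⟨hc, rfl⟩
    rw [← Fin.cons_self_tail c, cons_mem_chainsAbove] at hc
    exact ⟨Fin.tail c, hc.2, Fin.cons_self_tail c⟩
  · rintro ⟨c, hc, rfl⟩
    exact ⟨cons_mem_chainsAbove.2 ⟨⟨hy, hxy⟩, hc⟩, rfl⟩

theorem ncard_chainsAbove_modEq_one [Finite α] {n : ℕ} {level : Fin (r + 1) → Set α}
    (h : ∀ i : Fin r, ∀ x ∈ level i.castSucc, {y ∈ level i.succ | x ≤ y}.ncard ≡ 1 [MOD n])
    {x : α} (hx : x ∈ level 0) :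
    (chainsAbove (fun i ↦ level i.succ) x).ncard ≡ 1 [MOD n] := by
  induction r generalizing x with
  | zero => simp [chainsAbove, Subsingleton.monotone, Nat.ModEq.refl]
  | succ r ih =>
    have mapsTo : MapsTo (fun c ↦ c 0) (chainsAbove (fun i ↦ level i.succ) x)
        {y ∈ level 1 | x ≤ y} := fun c hc ↦ ⟨hc.2.1 0, hc.2.2 0⟩
    refine (ncard_modEq_ncard_of_mapsTo mapsTo fun y hy ↦ ?_).trans (h 0 x hx)
    rw [chainsAbove_fiber hy.1 hy.2, ncard_image_of_injective _ (Fin.cons_right_injective _)]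
    exact ih (level := fun i ↦ level i.succ) (fun i ↦ h i.succ) hy.1

end Chains

/-- Let `G` be a finite group of order `N`, `p` a prime, and `b 0 < b 1 < ⋯ < b r`
nonnegative integers with `p ^ b r ∣ N`. Given a fixed subgroup `P₀` of order `p ^ b 0`,
the number of ordered tuples `(P 0, …, P (r-1))` of subgroups of `G` (corresponding to
`P_{b_1}, …, P_{b_r}`) with `Nat.card (P i) = p ^ b (i+1)` forming an ascending chain above
`P₀` is congruent to `1` mod `p`. -/
theorem frobenius_chain_count {G : Type*} [Group G] [Fintype G] (p : ℕ) (hp : p.Prime)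
    (r : ℕ) (b : Fin (r + 1) → ℕ) (hb : StrictMono b)
    (hdvd : p ^ b (Fin.last r) ∣ Fintype.card G)
    (P₀ : Subgroup G) (hP₀ : Nat.card P₀ = p ^ b 0) :
    Nat.card {P : Fin r → Subgroup G //
        Monotone P ∧ (∀ i : Fin r, Nat.card (P i) = p ^ b i.succ) ∧ ∀ i : Fin r, P₀ ≤ P i}
      ≡ 1 [MOD p] := by
  have : Fact p.Prime := ⟨hp⟩
  refine ncard_chainsAbove_modEq_one
    (level := fun i ↦ {P : Subgroup G | Nat.card P = p ^ b i}) ?_ hP₀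
  intro i P hP
  refine ncard_subgroups_ge_modEq_one hP (hb.monotone i.castSucc_lt_succ.le) ?_
  rw [Nat.card_eq_fintype_card]
  exact (pow_dvd_pow p (hb.monotone (Fin.le_last _))).trans hdvd
end

section
/- (Snapper's theorem) Let $G$ be a finite group, $p$ a prime, and $r \le s$ nonnegative integers such that $p^s$ divides the order of $G$. Let $K$ be a subgroup of $G$ of order $p^r$. Then the number of subgroups of $G$ of order $p^s$ containing $K$ is congruent to $1$ modulo $p$. -/
/-!
A Wielandt-style count. Let `G` act transitively on `X`, fix `a : X`, and sort the subsets of size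
`p ^ k` containing `a` according to their orbits under `G`. If `d` translates of `B` contain `a`,
then counting the pairs (translate of `B`, point on it) in two ways and applying the
orbit-stabilizer theorem give `d * |stabilizer B| = |B| * |stabilizer a|`. So when `stabilizer a` is
a `p`-group, `d` is a power of `p`, and `d = 1` exactly when `B` is a block. Modulo `p`, the number
of blocks of size `p ^ k` through `a` is therefore the number of all subsets of size `p ^ k` through
`a`, namely `(|X| - 1).choose (p ^ k - 1)`, which is `1` by Lucas' theorem when `p ^ k ∣ |X|`.
For `X = G ⧸ K` and `a = K`, the blocks through `a` correspond to the subgroups containing `K`.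
-/

open MulAction
open scoped Pointwise

section Counting

theorem choose_pred_prime_pow_pred_modEq_one {p : ℕ} [Fact p.Prime] (k : ℕ) {n : ℕ} (hn : n ≠ 0)
    (hdvd : p ^ k ∣ n) : (n - 1).choose (p ^ k - 1) ≡ 1 [MOD p] := by
  have hp : 0 < p := (Fact.out : p.Prime).pos
  induction k generalizing n with
  | zero => simp [Nat.ModEq.refl]
  | succ k ih =>
    obtain ⟨m, rfl⟩ : p ∣ n := (dvd_pow_self p k.succ_ne_zero).trans hdvd
    have hm : m ≠ 0 := right_ne_zero_of_mul hn
    have pred_mod {c : ℕ} (hc : c ≠ 0) : (p * c - 1) % p = p - 1 := by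
      obtain ⟨c, rfl⟩ := Nat.exists_eq_succ_of_ne_zero hc
      rw [Nat.mul_succ, Nat.add_sub_assoc hp, Nat.mul_add_mod, Nat.mod_eq_of_lt (by omega)]
    have pred_div {c : ℕ} (hc : c ≠ 0) : (p * c - 1) / p = c - 1 := by
      obtain ⟨c, rfl⟩ := Nat.exists_eq_succ_of_ne_zero hc
      rw [Nat.mul_succ, Nat.add_sub_assoc hp, Nat.mul_add_div hp, Nat.div_eq_of_lt (by omega)]
      rfl
    have hpk : p ^ k ≠ 0 := (pow_pos hp k).ne'
    rw [pow_succ'] at hdvd ⊢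
    have lucas := Choose.choose_modEq_choose_mod_mul_choose_div_nat
      (p := p) (n := p * m - 1) (k := p * p ^ k - 1)
    rw [pred_mod hm, pred_mod hpk, pred_div hm, pred_div hpk, Nat.choose_self, one_mul] at lucas
    exact lucas.trans (ih hm (Nat.dvd_of_mul_dvd_mul_left hp hdvd))

theorem ncard_setOf_mem_and_ncard_eq {α : Type*} [Finite α] (a : α) {n : ℕ} (hn : n ≠ 0) :
    {s : Set α | a ∈ s ∧ s.ncard = n}.ncard = (Nat.card α - 1).choose (n - 1) := by
  classical
  have := Fintype.ofFinite α
  have himage : {s : Set α | a ∈ s ∧ s.ncard = n} =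
      (↑) '' (((Finset.univ.powersetCard n).filter ({a} ⊆ ·) : Finset (Finset α)) :
        Set (Finset α)) := by
    ext s
    lift s to Finset α using s.toFinite
    simp [and_comm]
  rw [himage, Set.ncard_image_of_injective _ Finset.coe_injective, Set.ncard_coe_finset,
    Finset.card_filter_powersetCard_subset _ _ _ (Finset.subset_univ _)
      (by simpa using Nat.one_le_iff_ne_zero.2 hn),
    Finset.card_univ, Finset.card_singleton, Nat.card_eq_fintype_card]

theorem dvd_ncard_of_forall_dvd_ncard_fiber {α β : Type*} {n : ℕ} {s : Set α} (hs : s.Finite)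
    (f : α → β) (h : ∀ x ∈ s, n ∣ {y ∈ s | f y = f x}.ncard) : n ∣ s.ncard := by
  classical
  lift s to Finset α using hs
  rw [Set.ncard_coe_finset, Finset.card_eq_sum_card_image f]
  refine Finset.dvd_sum fun b hb ↦ ?_
  obtain ⟨x, hx, rfl⟩ := Finset.mem_image.1 hb
  rw [← Set.ncard_coe_finset, Finset.coe_filter]
  exact h x hx

end Counting

section Blocks

variable (G : Type*) {X : Type*} [Group G] [MulAction G X]

/-- The translates `g • B` of a set `B` that pass through the point `a`. Their number measures how
far `B` is from being a block. -/
def translatesThrough (a : X) (B : Set X) : Set (Set X) :=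
  {C ∈ orbit G B | a ∈ C}

theorem ncard_translatesThrough_smul (g : G) (a : X) (B : Set X) :
    (translatesThrough G (g • a) B).ncard = (translatesThrough G a B).ncard := by
  have : translatesThrough G (g • a) B = g • translatesThrough G a B := by
    ext C
    simp [translatesThrough, Set.mem_smul_set_iff_inv_smul_mem, ← orbit_eq_iff]
  rw [this, Set.ncard_smul_set]

variable [IsPretransitive G X]

theorem ncard_orbit_mul_ncard [Finite X] (a : X) (B : Set X) :
    (orbit G B).ncard * B.ncard = Nat.card X * (translatesThrough G a B).ncard := by
  classical
  have := Fintype.ofFinite X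
  rw [Set.ncard_eq_toFinset_card', Nat.card_eq_fintype_card, ← Finset.card_univ]
  refine Finset.card_mul_eq_card_mul (fun C x ↦ x ∈ C) (fun C hC ↦ ?_) fun x _ ↦ ?_
  · obtain ⟨g, rfl⟩ := Set.mem_toFinset.1 hC
    rw [← Set.ncard_smul_set g B, ← Set.ncard_coe_finset]
    simp [Finset.bipartiteAbove]
  · obtain ⟨g, rfl⟩ := exists_smul_eq G a x
    rw [← ncard_translatesThrough_smul G g, ← Set.ncard_coe_finset]
    simp [Finset.bipartiteBelow, translatesThrough]

theorem ncard_translatesThrough_mul_card_stabilizer [Finite X] [Finite G] (a : X) (B : Set X) :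
    (translatesThrough G a B).ncard * Nat.card (stabilizer G B) =
      B.ncard * Nat.card (stabilizer G a) := by
  have : Nonempty X := ⟨a⟩
  refine Nat.eq_of_mul_eq_mul_left (Nat.card_pos (α := X)) ?_
  calc
    _ = (orbit G B).ncard * B.ncard * Nat.card (stabilizer G B) := by
      rw [ncard_orbit_mul_ncard G a, mul_assoc]
    _ = B.ncard * Nat.card G := by
      rw [← (stabilizer G B).card_mul_index, index_stabilizer]; ring
    _ = Nat.card X * (B.ncard * Nat.card (stabilizer G a)) := by
      rw [← (stabilizer G a).card_mul_index, index_stabilizer_of_transitive]; ring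

variable {G}

theorem isBlock_iff_ncard_translatesThrough_eq_one {a : X} {B : Set X} (ha : a ∈ B) :
    IsBlock G B ↔ (translatesThrough G a B).ncard = 1 := by
  have hB : B ∈ translatesThrough G a B := ⟨mem_orbit_self B, ha⟩
  rw [Set.ncard_eq_one]
  constructor
  · refine fun hblock ↦ ⟨B, Set.eq_singleton_iff_unique_mem.2 ⟨hB, ?_⟩⟩
    rintro _ ⟨⟨g, rfl⟩, hga⟩
    exact isBlock_iff_smul_eq_of_nonempty.1 hblock ⟨a, hga, ha⟩
  · rintro ⟨C, hC⟩
    have eq_of_mem {g : G} (hg : a ∈ g • B) : g • B = B :=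
      (hC.subset ⟨mem_orbit B g, hg⟩).trans (hC.subset hB).symm
    rw [isBlock_iff_smul_eq_of_nonempty]
    rintro g ⟨x, hxg, hx⟩
    obtain ⟨h, rfl⟩ := exists_smul_eq G a x
    rw [← Set.mem_inv_smul_set_iff] at hxg hx
    rw [smul_smul] at hxg
    have hgB : h⁻¹ • g • B = h⁻¹ • B := by rw [smul_smul, eq_of_mem hxg, eq_of_mem hx]
    exact smul_left_cancel h⁻¹ hgB

theorem prime_dvd_ncard_translatesThrough [Finite X] [Finite G] {p : ℕ} [Fact p.Prime] {k : ℕ}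
    {a : X} (hstab : IsPGroup p (stabilizer G a)) {B : Set X} (ha : a ∈ B) (hB : B.ncard = p ^ k)
    (hblock : ¬ IsBlock G B) : p ∣ (translatesThrough G a B).ncard := by
  obtain ⟨r, hr⟩ := IsPGroup.iff_card.1 hstab
  have hdvd : (translatesThrough G a B).ncard ∣ p ^ (k + r) := by
    rw [pow_add, ← hB, ← hr, ← ncard_translatesThrough_mul_card_stabilizer]
    exact dvd_mul_right _ _
  obtain ⟨j, -, hj⟩ := (Nat.dvd_prime_pow Fact.out).1 hdvd
  have hj0 : j ≠ 0 := by
    rintro rfl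
    exact hblock ((isBlock_iff_ncard_translatesThrough_eq_one ha).2 hj)
  exact hj ▸ dvd_pow_self p hj0

theorem ncard_isBlock_modEq_ncard [Finite X] [Finite G] {p : ℕ} [Fact p.Prime] (k : ℕ) {a : X}
    (hstab : IsPGroup p (stabilizer G a)) :
    {B : Set X | (a ∈ B ∧ B.ncard = p ^ k) ∧ IsBlock G B}.ncard ≡
      {B : Set X | a ∈ B ∧ B.ncard = p ^ k}.ncard [MOD p] := by
  set S := {B : Set X | a ∈ B ∧ B.ncard = p ^ k}
  have hfiber : ∀ B ∈ S \ {B | IsBlock G B},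
      {C ∈ S \ {B | IsBlock G B} | orbit G C = orbit G B} = translatesThrough G a B := by
    rintro B ⟨⟨-, hB⟩, hblock⟩
    ext C
    refine ⟨fun hC ↦ ⟨orbit_eq_iff.1 hC.2, hC.1.1.1⟩, ?_⟩
    rintro ⟨⟨g, rfl⟩, ha⟩
    refine ⟨⟨⟨ha, (Set.ncard_smul_set g B).trans hB⟩, fun hgB ↦ hblock ?_⟩, orbit_smul g B⟩
    simpa using IsBlock.translate g⁻¹ hgB
  have hdvd : p ∣ (S \ {B | IsBlock G B}).ncard := by
    refine dvd_ncard_of_forall_dvd_ncard_fiber (Set.toFinite _) (orbit G) fun B hB ↦ ?_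
    rw [hfiber B hB]
    exact prime_dvd_ncard_translatesThrough hstab hB.1.1 hB.1.2 hB.2
  rw [← Set.ncard_inter_add_ncard_sdiff_eq_ncard S {B | IsBlock G B}]
  exact ((Nat.modEq_zero_iff_dvd.2 hdvd).add_left (S ∩ {B | IsBlock G B}).ncard).symm

theorem ncard_isBlock_modEq_one [Finite X] [Finite G] {p : ℕ} [hp : Fact p.Prime] {k : ℕ} {a : X}
    (hstab : IsPGroup p (stabilizer G a)) (hdvd : p ^ k ∣ Nat.card X) :
    {B : Set X | (a ∈ B ∧ B.ncard = p ^ k) ∧ IsBlock G B}.ncard ≡ 1 [MOD p] := by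
  have : Nonempty X := ⟨a⟩
  refine (ncard_isBlock_modEq_ncard k hstab).trans ?_
  rw [ncard_setOf_mem_and_ncard_eq a (pow_ne_zero k hp.out.ne_zero)]
  exact choose_pred_prime_pow_pred_modEq_one k Nat.card_pos.ne' hdvd

theorem card_stabilizer_of_isBlock {a : X} {B : Set X} (ha : a ∈ B) (hB : IsBlock G B) :
    Nat.card (stabilizer G B) = B.ncard * Nat.card (stabilizer G a) := by
  rw [hB.ncard_block_eq_relIndex ha, mul_comm, ← Subgroup.relIndex_bot_left,
    ← Subgroup.relIndex_bot_left, Subgroup.relIndex_mul_relIndex _ _ _ bot_le (hB.stabilizer_le ha)]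

theorem card_subgroup_ge_stabilizer_eq_ncard_isBlock (a : X)
    [Finite (stabilizer G a)] (n : ℕ) :
    Nat.card {H : Subgroup G // Nat.card H = n * Nat.card (stabilizer G a) ∧ stabilizer G a ≤ H} =
      {B : Set X | (a ∈ B ∧ B.ncard = n) ∧ IsBlock G B}.ncard := by
  rw [← Nat.card_coe_set_eq]
  refine Eq.symm <| Nat.card_congr
    { toFun B := ⟨stabilizer G B.1, ?_, B.2.2.stabilizer_le B.2.1.1⟩
      invFun H := ⟨orbit H.1 a, ⟨mem_orbit_self a, ?_⟩, IsBlock.of_orbit H.2.2⟩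
      left_inv B := Subtype.ext (B.2.2.orbit_stabilizer_eq B.2.1.1)
      right_inv H := Subtype.ext (stabilizer_orbit_eq H.2.2) }
  · rw [card_stabilizer_of_isBlock B.2.1.1 B.2.2, B.2.1.2]
  · have hcard := card_stabilizer_of_isBlock (mem_orbit_self a) (IsBlock.of_orbit H.2.2)
    rw [stabilizer_orbit_eq H.2.2, H.2.1] at hcard
    exact (Nat.eq_of_mul_eq_mul_right Nat.card_pos hcard).symm

end Blocks

/-- Snapper's theorem: if `p ^ s ∣ |G|`, `r ≤ s` and `K ≤ G` has order `p ^ r`, then the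
number of subgroups of `G` of order `p ^ s` containing `K` is congruent to `1` mod `p`. -/
theorem snapper {G : Type*} [Group G] [Fintype G] (p r s : ℕ) (hp : p.Prime)
    (hrs : r ≤ s) (hdvd : p ^ s ∣ Fintype.card G)
    (K : Subgroup G) (hK : Nat.card K = p ^ r) :
    Nat.card {Q : Subgroup G // Nat.card Q = p ^ s ∧ K ≤ Q} ≡ 1 [MOD p] := by
  have : Fact p.Prime := ⟨hp⟩
  obtain ⟨k, rfl⟩ := Nat.exists_eq_add_of_le' hrs
  have hstab : stabilizer G ((1 : G) : G ⧸ K) = K := stabilizer_quotient K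
  have hindex : p ^ k ∣ Nat.card (G ⧸ K) := by
    rw [← Nat.card_eq_fintype_card, K.card_eq_card_quotient_mul_card_subgroup, hK, pow_add] at hdvd
    exact Nat.dvd_of_mul_dvd_mul_right (pow_pos hp.pos r) hdvd
  have hcount := card_subgroup_ge_stabilizer_eq_ncard_isBlock (G := G) ((1 : G) : G ⧸ K) (p ^ k)
  rw [hstab, hK, ← pow_add] at hcount
  rw [hcount]
  exact ncard_isBlock_modEq_one (by rw [hstab]; exact IsPGroup.of_card hK) hindex
end

section
/- (Frobenius' theorem) Let $G$ be a finite group of order $N$, let $p$ be a prime, and let $r$ be a nonnegative integer such that $p^r$ divides $N$. Then the number of subgroups of $G$ of order $p^r$ is congruent to $1$ modulo $p$. -/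
/-!
Let `G` have order `p ^ r * m` and act by left translation on its subsets of size `p ^ r`
(Wielandt). The stabilizer of such a subset acts freely on it, so its order is a power of `p`
dividing `p ^ r`. The subsets whose stabilizer has order exactly `p ^ r` are the right cosets of
the subgroups of order `p ^ r`, so there are `m` of them for each such subgroup; every other subset
lies in an orbit of size divisible by `p * m`. Hence the number of subgroups of order `p ^ r`,
multiplied by `m`, is congruent modulo `p * m` to a number that depends only on the order of `G`.
The number of subgroups modulo `p` is therefore the same as for the cyclic group of that order,
which has exactly one.
-/

open MulAction
open scoped Pointwise

section Orbits

variable {G X : Type*} [Group G] [MulAction G X]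

theorem dvd_card_of_forall_dvd_index_stabilizer [Finite X] {d : ℕ}
    (hd : ∀ x : X, d ∣ (stabilizer G x).index) : d ∣ Nat.card X := by
  have := Fintype.ofFinite (orbitRel.Quotient G X)
  rw [Nat.card_congr (selfEquivSigmaOrbits G X), Nat.card_sigma]
  refine Finset.dvd_sum fun ω _ ↦ ?_
  rw [Nat.card_coe_set_eq, ← index_stabilizer]
  exact hd _

theorem dvd_ncard_of_forall_dvd_index_stabilizer {s : Set X} (hs : s.Finite)
    (hsmul : ∀ (g : G), ∀ x ∈ s, g • x ∈ s) {d : ℕ}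
    (hd : ∀ x ∈ s, d ∣ (stabilizer G x).index) : d ∣ s.ncard := by
  let Y : SubMulAction G X := ⟨s, fun g x hx ↦ hsmul g x hx⟩
  have : Finite Y := hs
  refine dvd_card_of_forall_dvd_index_stabilizer (G := G) (X := Y) fun y ↦ ?_
  rw [SubMulAction.stabilizer_of_subMul]
  exact hd y y.2

theorem card_stabilizer_smul (g : G) (x : X) :
    Nat.card (stabilizer G (g • x)) = Nat.card (stabilizer G x) :=
  Nat.card_congr (stabilizerEquivStabilizer (g := g) rfl).symm.toEquiv

end Orbits

section Translation

variable {G : Type*} [Group G]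

theorem card_stabilizer_dvd_ncard {A : Set G} (hA : A.Finite) :
    Nat.card (stabilizer G A) ∣ A.ncard := by
  refine dvd_ncard_of_forall_dvd_index_stabilizer (G := stabilizer G A) hA
    (fun g x hx ↦ (mem_stabilizer_set.1 g.2 x).2 hx) fun x _ ↦ ?_
  have stabilizer_eq_bot : stabilizer (stabilizer G A) x = ⊥ :=
    (Subgroup.eq_bot_iff_forall _).2 fun g hg ↦
      Subtype.ext (mul_eq_right.1 (mem_stabilizer_iff.1 hg))
  rw [stabilizer_eq_bot, Subgroup.index_bot]

theorem mem_orbit_mulOpposite_subgroup_iff {H : Subgroup G} [Finite H] {A : Set G} :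
    A ∈ orbit Gᵐᵒᵖ (H : Set G) ↔ A.ncard = Nat.card H ∧ stabilizer G A = H := by
  constructor
  · rintro ⟨g, rfl⟩
    exact ⟨(Set.ncard_smul_set g _).trans (Nat.card_coe_set_eq _).symm,
      (stabilizer_smul_eq_right g _).trans (stabilizer_subgroup H)⟩
  · rintro ⟨hcard, hstab⟩
    have hpos : 0 < A.ncard := hcard ▸ Nat.card_pos
    obtain ⟨a, ha⟩ := Set.nonempty_of_ncard_ne_zero hpos.ne'
    have coset_subset : MulOpposite.op a • (H : Set G) ⊆ A :=
      hstab ▸ op_smul_set_stabilizer_subset ha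
    refine ⟨MulOpposite.op a, Set.eq_of_subset_of_ncard_le coset_subset ?_
      (Set.finite_of_ncard_pos hpos)⟩
    rw [hcard, Set.ncard_smul_set]
    exact (Nat.card_coe_set_eq _).le

theorem index_subgroup_op (H : Subgroup G) : H.op.index = H.index := by
  have comap_op : H.op.comap (MulEquiv.inv' G : G →* Gᵐᵒᵖ) = H := by
    ext
    simp
  calc H.op.index = (H.op.comap (MulEquiv.inv' G : G →* Gᵐᵒᵖ)).index :=
        (H.op.index_comap_of_surjective (f := (MulEquiv.inv' G : G →* Gᵐᵒᵖ))
          (MulEquiv.inv' G).surjective).symm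
    _ = H.index := by rw [comap_op]

theorem ncard_orbit_mulOpposite_subgroup (H : Subgroup G) :
    (orbit Gᵐᵒᵖ (H : Set G)).ncard = H.index := by
  rw [← index_stabilizer, stabilizer_op_subgroup, index_subgroup_op]

variable [Finite G]

theorem ncard_setOf_ncard_eq_and_card_stabilizer_eq (n : ℕ) :
    {A : Set G | A.ncard = n ∧ Nat.card (stabilizer G A) = n}.ncard =
      Nat.card {Q : Subgroup G // Nat.card Q = n} * (Nat.card G / n) := by
  have eq_iUnion_cosets : {A : Set G | A.ncard = n ∧ Nat.card (stabilizer G A) = n} =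
      ⋃ Q : {Q : Subgroup G // Nat.card Q = n}, orbit Gᵐᵒᵖ (Q : Set G) := by
    ext A
    simp +contextual [mem_orbit_mulOpposite_subgroup_iff]
  have pairwise_disjoint : Pairwise (Function.onFun Disjoint
      fun Q : {Q : Subgroup G // Nat.card Q = n} ↦ orbit Gᵐᵒᵖ (Q : Set G)) := fun Q R hQR ↦
    Set.disjoint_left.2 fun A hQ hR ↦ hQR <| Subtype.ext <|
      (mem_orbit_mulOpposite_subgroup_iff.1 hQ).2.symm.trans
        (mem_orbit_mulOpposite_subgroup_iff.1 hR).2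
  have ncard_cosets (Q : {Q : Subgroup G // Nat.card Q = n}) :
      (orbit Gᵐᵒᵖ (Q : Set G)).ncard = Nat.card G / n := by
    rw [ncard_orbit_mulOpposite_subgroup, ← Q.1.card_mul_index, Q.2,
      Nat.mul_div_cancel_left _ (Q.2 ▸ Nat.card_pos)]
  have := Fintype.ofFinite {Q : Subgroup G // Nat.card Q = n}
  rw [eq_iUnion_cosets, Set.ncard_iUnion_of_finite (fun _ ↦ Set.toFinite _) pairwise_disjoint,
    finsum_eq_sum_of_fintype, Finset.sum_congr rfl fun Q _ ↦ ncard_cosets Q, Finset.sum_const,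
    Finset.card_univ, ← Nat.card_eq_fintype_card, smul_eq_mul]

variable {p r : ℕ}

theorem mul_dvd_index_of_card_dvd_prime_pow (hp : p.Prime) (hdvd : p ^ r ∣ Nat.card G)
    {H : Subgroup G} (hH : Nat.card H ∣ p ^ r) (hne : Nat.card H ≠ p ^ r) :
    p * (Nat.card G / p ^ r) ∣ H.index := by
  obtain ⟨k, hkr, hk⟩ := (Nat.dvd_prime_pow hp).1 hH
  have hlt : k < r := lt_of_le_of_ne hkr fun h ↦ hne (h ▸ hk)
  refine Nat.dvd_of_mul_dvd_mul_left (Nat.card_pos (α := H)) ?_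
  calc Nat.card H * (p * (Nat.card G / p ^ r)) = p ^ (k + 1) * (Nat.card G / p ^ r) := by
        rw [hk, pow_succ, mul_assoc]
    _ ∣ p ^ r * (Nat.card G / p ^ r) := Nat.mul_dvd_mul_right (pow_dvd_pow p hlt) _
    _ = Nat.card H * H.index := by rw [Nat.mul_div_cancel' hdvd, H.card_mul_index]

theorem mul_dvd_ncard_setOf_card_stabilizer_ne (hp : p.Prime) (hdvd : p ^ r ∣ Nat.card G) :
    p * (Nat.card G / p ^ r) ∣
      {A : Set G | A.ncard = p ^ r ∧ Nat.card (stabilizer G A) ≠ p ^ r}.ncard := by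
  refine dvd_ncard_of_forall_dvd_index_stabilizer (G := G) (Set.toFinite _) ?_ ?_
  · rintro g A ⟨hA, hstab⟩
    exact ⟨(Set.ncard_smul_set g A).trans hA, (card_stabilizer_smul g A).trans_ne hstab⟩
  · rintro A ⟨hA, hstab⟩
    exact mul_dvd_index_of_card_dvd_prime_pow hp hdvd
      (hA ▸ card_stabilizer_dvd_ncard A.toFinite) hstab

theorem ncard_setOf_ncard_eq_prime_pow_modEq (hp : p.Prime) (hdvd : p ^ r ∣ Nat.card G) :
    {A : Set G | A.ncard = p ^ r}.ncard ≡
      Nat.card {Q : Subgroup G // Nat.card Q = p ^ r} * (Nat.card G / p ^ r)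
        [MOD p * (Nat.card G / p ^ r)] := by
  have split := Set.ncard_inter_add_ncard_sdiff_eq_ncard {A : Set G | A.ncard = p ^ r}
    {A | Nat.card (stabilizer G A) = p ^ r}
  rw [← split, ← ncard_setOf_ncard_eq_and_card_stabilizer_eq]
  exact Nat.add_modEq_left_iff.2 (mul_dvd_ncard_setOf_card_stabilizer_ne hp hdvd)

end Translation

theorem ncard_setOf_ncard_eq_congr {α β : Type*} (e : α ≃ β) (n : ℕ) :
    {A : Set α | A.ncard = n}.ncard = {B : Set β | B.ncard = n}.ncard := by
  refine Set.ncard_congr' ((Equiv.Set.congr e).subtypeEquiv fun A ↦ ?_)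
  simp [Set.ncard_image_of_injective A e.injective]

theorem card_subgroup_card_eq_prime_pow_modEq_of_card_eq {G H : Type*} [Group G] [Finite G]
    [Group H] [Finite H] {p r : ℕ} (hp : p.Prime) (hGH : Nat.card G = Nat.card H)
    (hdvd : p ^ r ∣ Nat.card G) :
    Nat.card {Q : Subgroup G // Nat.card Q = p ^ r} ≡
      Nat.card {Q : Subgroup H // Nat.card Q = p ^ r} [MOD p] := by
  obtain ⟨e⟩ := Finite.card_eq.1 hGH
  have hindex : Nat.card G / p ^ r ≠ 0 :=
    (Nat.div_pos (Nat.le_of_dvd Nat.card_pos hdvd) (pow_pos hp.pos r)).ne'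
  have hG := ncard_setOf_ncard_eq_prime_pow_modEq hp hdvd
  have hH := ncard_setOf_ncard_eq_prime_pow_modEq (G := H) hp (hGH ▸ hdvd)
  rw [← hGH, ← ncard_setOf_ncard_eq_congr e] at hH
  exact Nat.ModEq.mul_right_cancel' hindex (hG.symm.trans hH)

theorem card_subgroup_card_eq_of_isCyclic {G : Type*} [CommGroup G] [IsCyclic G] [Finite G]
    {n : ℕ} (hn : n ∣ Nat.card G) : Nat.card {Q : Subgroup G // Nat.card Q = n} = 1 := by
  have card_ker : Nat.card (powMonoidHom n : G →* G).ker = n := by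
    rw [IsCyclic.card_powMonoidHom_ker, Nat.gcd_eq_right hn]
  have eq_ker (Q : Subgroup G) (hQ : Nat.card Q = n) : Q = (powMonoidHom n : G →* G).ker := by
    refine Subgroup.eq_of_le_of_card_ge (fun x hx ↦ ?_) (card_ker.trans hQ.symm).le
    rw [MonoidHom.mem_ker, powMonoidHom_apply, ← hQ]
    exact congrArg Subtype.val (pow_card_eq_one' (x := (⟨x, hx⟩ : Q)))
  exact Nat.card_eq_one_iff_exists.2 ⟨⟨_, card_ker⟩, fun Q ↦ Subtype.ext (eq_ker Q Q.2)⟩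

/-- Frobenius' theorem: if `p ^ r` divides the order of a finite group `G`, then the
number of subgroups of `G` of order `p ^ r` is congruent to `1` mod `p`. -/
theorem frobenius_subgroup_count {G : Type*} [Group G] [Fintype G] (p r : ℕ) (hp : p.Prime)
    (hdvd : p ^ r ∣ Fintype.card G) :
    Nat.card {Q : Subgroup G // Nat.card Q = p ^ r} ≡ 1 [MOD p] := by
  rw [← Nat.card_eq_fintype_card] at hdvd
  let C := Multiplicative (ZMod (Nat.card G))
  have card_eq : Nat.card G = Nat.card C := (Nat.card_zmod _).symm
  calc Nat.card {Q : Subgroup G // Nat.card Q = p ^ r}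
    _ ≡ Nat.card {Q : Subgroup C // Nat.card Q = p ^ r} [MOD p] :=
        card_subgroup_card_eq_prime_pow_modEq_of_card_eq hp card_eq hdvd
    _ = 1 := card_subgroup_card_eq_of_isCyclic (card_eq ▸ hdvd)
end

section
/- Let $G$ be a finite group whose order is divisible by a prime $p$. Then the number of elements of $G$ of order exactly $p$ is congruent to $-1$ modulo $p$. -/
/-!
McKay's argument: rotation acts on the `|G| ^ (p - 1)` tuples `(g₁, …, gₚ)` with `g₁ ⋯ gₚ = 1`, and
its `p`-th power is the identity, so modulo `p` only the fixed tuples count. These are the constant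
tuples `(g, …, g)` with `g ^ p = 1`, and such a `g` either is `1` or has order `p`.
-/

open Equiv.Perm Function

section Rotation

variable {G : Type*} [Group G] {n : ℕ}

theorem vectorsProdEqOne_rotate_one_iterate (k : ℕ) (v : vectorsProdEqOne G n) :
    (fun w : vectorsProdEqOne G n ↦ VectorsProdEqOne.rotate w 1)^[k] v =
      VectorsProdEqOne.rotate v k := by
  induction k with
  | zero => exact (VectorsProdEqOne.rotate_zero v).symm
  | succ k ih => rw [iterate_succ_apply', ih, VectorsProdEqOne.rotate_rotate]

theorem vectorsProdEqOne_rotate_one_eq_self_iff (v : vectorsProdEqOne G n) :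
    VectorsProdEqOne.rotate v 1 = v ↔ ∃ g : G, v.1 = List.Vector.replicate n g := by
  obtain ⟨⟨l, rfl⟩, hl⟩ := v
  calc
    VectorsProdEqOne.rotate ⟨⟨l, rfl⟩, hl⟩ 1 = ⟨⟨l, rfl⟩, hl⟩ ↔ l.rotate 1 = l :=
      Subtype.ext_iff.trans Subtype.ext_iff
    _ ↔ ∃ g, l = List.replicate l.length g := List.rotate_one_eq_self_iff_eq_replicate
    _ ↔ ∃ g, ⟨l, rfl⟩ = List.Vector.replicate l.length g :=
      exists_congr fun _ ↦ ⟨fun h ↦ List.Vector.eq _ _ h, congrArg List.Vector.toList⟩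

theorem replicate_mem_vectorsProdEqOne_iff (g : G) :
    List.Vector.replicate n g ∈ vectorsProdEqOne G n ↔ g ^ n = 1 := by
  rw [VectorsProdEqOne.mem_iff, ← List.prod_replicate]
  rfl

theorem card_fixedPoints_vectorsProdEqOne_rotate_one (hn : n ≠ 0) :
    Nat.card (fixedPoints fun v : vectorsProdEqOne G n ↦ VectorsProdEqOne.rotate v 1) =
      {g : G | g ^ n = 1}.ncard := by
  symm
  let constant (g : {g : G | g ^ n = 1}) :
      fixedPoints fun v : vectorsProdEqOne G n ↦ VectorsProdEqOne.rotate v 1 :=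
    ⟨⟨List.Vector.replicate n g, (replicate_mem_vectorsProdEqOne_iff _).2 g.2⟩,
      (vectorsProdEqOne_rotate_one_eq_self_iff _).2 ⟨g, rfl⟩⟩
  refine Nat.card_eq_of_bijective constant ⟨fun g h hgh ↦ ?_, fun ⟨v, hv⟩ ↦ ?_⟩
  · have replicate_eq : List.replicate n g.1 = List.replicate n h.1 :=
      congrArg (fun v ↦ v.1.1.toList) hgh
    exact Subtype.ext ((List.replicate_right_inj hn).1 replicate_eq)
  · obtain ⟨g, hg⟩ := (vectorsProdEqOne_rotate_one_eq_self_iff v).1 hv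
    have hgn : g ^ n = 1 := (replicate_mem_vectorsProdEqOne_iff g).1 (hg ▸ v.2)
    exact ⟨⟨g, hgn⟩, Subtype.ext (Subtype.ext hg.symm)⟩

end Rotation

theorem ncard_pow_prime_eq_one_modEq (G : Type*) [Group G] [Finite G] (p : ℕ) [Fact p.Prime] :
    {g : G | g ^ p = 1}.ncard ≡ Nat.card G ^ (p - 1) [MOD p] := by
  classical
  have := Fintype.ofFinite G
  let rotation : Function.End (vectorsProdEqOne G p) := fun v ↦ VectorsProdEqOne.rotate v 1
  have rotation_pow : rotation ^ p ^ 1 = 1 := by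
    rw [pow_one]
    exact funext fun v ↦
      (vectorsProdEqOne_rotate_one_iterate p v).trans (VectorsProdEqOne.rotate_length v)
  have card_modEq := card_fixedPoints_modEq rotation_pow
  rw [VectorsProdEqOne.card, ← Nat.card_eq_fintype_card, ← Nat.card_eq_fintype_card,
    card_fixedPoints_vectorsProdEqOne_rotate_one (NeZero.ne p)] at card_modEq
  exact card_modEq.symm

theorem ncard_pow_prime_eq_one_eq_ncard_orderOf_add_one {M : Type*} [Monoid M] {p : ℕ}
    (hp : p.Prime) (hfin : {x : M | orderOf x = p}.Finite) :
    {x : M | x ^ p = 1}.ncard = {x : M | orderOf x = p}.ncard + 1 := by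
  have pow_eq_one_eq_insert : {x : M | x ^ p = 1} = insert 1 {x : M | orderOf x = p} := by
    ext x
    rw [Set.mem_ofPred_eq, ← orderOf_dvd_iff_pow_eq_one, Nat.dvd_prime hp, orderOf_eq_one_iff]
    rfl
  have one_notMem : (1 : M) ∉ {x : M | orderOf x = p} := by
    simpa only [Set.mem_ofPred_eq, orderOf_one] using hp.ne_one.symm
  rw [pow_eq_one_eq_insert, Set.ncard_insert_of_notMem one_notMem hfin]

theorem count_elements_order_p_general {G : Type*} [Group G] [Finite G] (p : ℕ) (hp : p.Prime) :
    (Nat.card {g : G // orderOf g = p} : ZMod p) = (Nat.card G : ZMod p) ^ (p - 1) - 1 := by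
  have : Fact p.Prime := ⟨hp⟩
  have card_modEq : Nat.card {g : G // orderOf g = p} + 1 ≡ Nat.card G ^ (p - 1) [MOD p] :=
    ncard_pow_prime_eq_one_eq_ncard_orderOf_add_one hp (Set.toFinite {g : G | orderOf g = p}) ▸
      ncard_pow_prime_eq_one_modEq G p
  rw [eq_sub_iff_add_eq]
  exact_mod_cast (ZMod.natCast_eq_natCast_iff _ _ p).2 card_modEq

/-- If a prime `p` divides the order of a finite group `G`, then the number of elements of
`G` of order exactly `p` is congruent to `-1` mod `p`. -/
theorem count_elements_order_p {G : Type*} [Group G] [Fintype G] (p : ℕ) (hp : p.Prime)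
    (hdvd : p ∣ Fintype.card G) :
    (Nat.card {g : G // orderOf g = p} : ZMod p) = -1 := by
  rw [count_elements_order_p_general p hp, Nat.card_eq_fintype_card,
    (ZMod.natCast_eq_zero_iff _ p).2 hdvd, zero_pow (Nat.sub_ne_zero_of_lt hp.one_lt), zero_sub]
end

section
/- Let $H$ be a finite group of order $M$, let $p$ be a prime with $p^n \mid M$ and $p^{n+1} \nmid M$, and let $0 \le r \le n$. Let $P_r$ be a subgroup of $H$ of order $p^r$. Then the number of ordered tuples $(P_{r+1}, P_{r+2}, \ldots, P_n)$ of subgroups of $H$ with $|P_i| = p^i$ for each $i$ and $P_r \le P_{r+1} \le \cdots \le P_n \le H$ is congruent to $1$ modulo $p$. -/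
/-!
Let `P` have order `p ^ r` with `p ^ (r + 1) ∣ |H|`. A subgroup of order `p ^ (r + 1)` containing
`P` normalizes `P`, being a `p`-group in which `P` has index `p`. Such subgroups therefore
correspond to the subgroups of order `p` of `N(P) ⧸ P`, a group whose order is divisible by `p`.

If `p` divides the order of a group `G`, then by McKay's argument (rotate the `p`-tuples with
product `1`) it divides the number of solutions of `x ^ p = 1`, which is `1 + s (p - 1)` for `s` the
number of subgroups of order `p`; hence `s ≡ 1`. So each member of a chain has `≡ 1` possible
successors modulo `p`, and the number of chains is `≡ 1` by induction on their length.
-/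

section PowEqOne

open Equiv.Perm Function

variable {G : Type*} [Group G]

theorem iterate_rotate_one {n : ℕ} (k : ℕ) (v : vectorsProdEqOne G n) :
    (fun w : vectorsProdEqOne G n ↦ VectorsProdEqOne.rotate w 1)^[k] v =
      VectorsProdEqOne.rotate v k := by
  induction k with
  | zero => exact (VectorsProdEqOne.rotate_zero v).symm
  | succ k ih => rw [iterate_succ_apply', ih, VectorsProdEqOne.rotate_rotate]

theorem card_fixedPoints_rotate_one {n : ℕ} (hn : n ≠ 0) :
    Nat.card (fixedPoints fun v : vectorsProdEqOne G n ↦ VectorsProdEqOne.rotate v 1) =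
      Nat.card {x : G // x ^ n = 1} := by
  symm
  refine Nat.card_eq_of_bijective
    (fun x ↦ ⟨⟨List.Vector.replicate n x.1, (List.prod_replicate n x.1).trans x.2⟩,
      Subtype.ext (Subtype.ext (List.rotate_replicate x.1 n 1))⟩) ⟨?_, ?_⟩
  · intro x y hxy
    have replicate_eq : List.replicate n x.1 = List.replicate n y.1 :=
      congrArg (fun v ↦ v.1.1.1) hxy
    exact Subtype.ext ((List.replicate_right_inj hn).1 replicate_eq)
  · rintro ⟨⟨⟨l, rfl⟩, hprod : l.prod = 1⟩, hfixed⟩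
    have rotate_eq : l.rotate 1 = l := congrArg (fun v ↦ v.1.1) hfixed
    obtain ⟨x, hx⟩ := List.rotate_one_eq_self_iff_eq_replicate.1 rotate_eq
    refine ⟨⟨x, ?_⟩, Subtype.ext (Subtype.ext (Subtype.ext hx.symm))⟩
    rw [← List.prod_replicate, ← hx, hprod]

theorem card_pow_prime_eq_one_modEq [Finite G] (p : ℕ) [hp : Fact p.Prime] :
    Nat.card {x : G // x ^ p = 1} ≡ Nat.card G ^ (p - 1) [MOD p] := by
  classical
  have := Fintype.ofFinite G
  let rotateOne : Function.End (vectorsProdEqOne G p) := fun v ↦ VectorsProdEqOne.rotate v 1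
  have rotateOne_pow : rotateOne ^ p ^ 1 = 1 := by
    funext v
    have pow_eq_iterate : rotateOne ^ p = rotateOne^[p] :=
      hom_coe_pow (fun f : Function.End (vectorsProdEqOne G p) ↦ f) rfl (fun _ _ ↦ rfl) rotateOne p
    rw [pow_one, pow_eq_iterate]
    exact (iterate_rotate_one p v).trans (VectorsProdEqOne.rotate_length v)
  have card_modEq := card_fixedPoints_modEq rotateOne_pow
  rw [VectorsProdEqOne.card, ← Nat.card_eq_fintype_card, ← Nat.card_eq_fintype_card] at card_modEq
  rw [← card_fixedPoints_rotate_one hp.out.ne_zero]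
  exact card_modEq.symm

end PowEqOne

section CyclicSubgroups

open Subgroup

variable {G : Type*} [Group G]

theorem card_generators_eq_totient (K : Subgroup G) [Finite K] [IsCyclic K] :
    Nat.card {x : G // zpowers x = K} = (Nat.card K).totient := by
  have := Fintype.ofFinite K
  have zpowers_eq_iff (x : G) : zpowers x = K ↔ ∃ h : x ∈ K, orderOf (⟨x, h⟩ : K) = Nat.card K := by
    refine ⟨fun h ↦ ?_, fun ⟨hxK, hx⟩ ↦ ?_⟩
    · subst h
      exact ⟨mem_zpowers x, by rw [orderOf_mk, Nat.card_zpowers]⟩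
    · exact eq_of_le_of_card_ge (zpowers_le.2 hxK) (by rw [Nat.card_zpowers, ← hx, orderOf_mk])
  calc Nat.card {x : G // zpowers x = K}
      = Nat.card {x : K // orderOf x = Nat.card K} :=
        Nat.card_congr ((Equiv.subtypeEquivRight zpowers_eq_iff).trans
          (Equiv.subtypeSubtypeEquivSubtypeExists (· ∈ K) (orderOf · = Nat.card K)).symm)
    _ = (Nat.card K).totient := by
        rw [Nat.card_eq_fintype_card, Fintype.card_subtype,
          IsCyclic.card_orderOf_eq_totient Nat.card_eq_fintype_card.dvd]

theorem card_orderOf_eq_card_isCyclic_mul_totient [Finite G] (n : ℕ) :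
    Nat.card {x : G // orderOf x = n} =
      Nat.card {K : Subgroup G // IsCyclic K ∧ Nat.card K = n} * n.totient := by
  have := Fintype.ofFinite {K : Subgroup G // IsCyclic K ∧ Nat.card K = n}
  have orderOf_eq_iff (x : G) :
      orderOf x = n ↔ IsCyclic (zpowers x) ∧ Nat.card (zpowers x) = n := by
    rw [Nat.card_zpowers, and_iff_right (isCyclic_zpowers x)]
  have card_generators_eq (K : {K : Subgroup G // IsCyclic K ∧ Nat.card K = n}) :
      Nat.card {x : G // zpowers x = K} = n.totient := by
    have := K.2.1
    rw [card_generators_eq_totient, K.2.2]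
  rw [← Nat.card_congr (Equiv.sigmaSubtypeFiberEquivSubtype zpowers
    (q := fun K ↦ IsCyclic K ∧ Nat.card K = n) orderOf_eq_iff), Nat.card_sigma]
  simp only [card_generators_eq, Finset.sum_const, smul_eq_mul, Finset.card_univ,
    Nat.card_eq_fintype_card]

variable [Finite G] (p : ℕ) [hp : Fact p.Prime]

theorem card_pow_prime_eq_one :
    Nat.card {x : G // x ^ p = 1} = Nat.card {K : Subgroup G // Nat.card K = p} * (p - 1) + 1 := by
  have := Fintype.ofFinite G
  have := Classical.decEq G
  have isCyclic_and_iff (K : Subgroup G) : IsCyclic K ∧ Nat.card K = p ↔ Nat.card K = p :=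
    and_iff_right_of_imp isCyclic_of_prime_card
  have card_orderOf_eq_prime := card_orderOf_eq_card_isCyclic_mul_totient (G := G) p
  simp only [isCyclic_and_iff, Nat.totient_prime hp.out] at card_orderOf_eq_prime
  have card_orderOf_eq_one : Finset.card {x : G | orderOf x = 1} = 1 :=
    Finset.card_eq_one.2 ⟨1, by ext; simp⟩
  rw [← card_orderOf_eq_prime]
  simp only [Nat.card_eq_fintype_card, Fintype.card_subtype]
  rw [← sum_card_orderOf_eq_card_pow_eq_one hp.out.ne_zero, hp.out.sum_divisors,
    card_orderOf_eq_one]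

theorem card_subgroup_card_eq_prime_modEq_one (hdvd : p ∣ Nat.card G) :
    Nat.card {K : Subgroup G // Nat.card K = p} ≡ 1 [MOD p] := by
  set s := Nat.card {K : Subgroup G // Nat.card K = p}
  have hp1 : p - 1 ≠ 0 := Nat.sub_ne_zero_of_lt hp.out.one_lt
  have card_modEq_zero : s * (p - 1) + 1 ≡ 0 [MOD p] := by
    rw [← card_pow_prime_eq_one]
    exact (card_pow_prime_eq_one_modEq p).trans
      (Nat.modEq_zero_iff_dvd.2 (hdvd.trans (dvd_pow_self _ hp1)))
  calc s ≡ s + (s * (p - 1) + 1) [MOD p] := by simpa using (card_modEq_zero.add_left s).symm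
    _ = s * p + 1 := by
        obtain ⟨q, rfl⟩ := Nat.exists_eq_succ_of_ne_zero hp.out.ne_zero
        simp only [Nat.succ_eq_add_one, Nat.add_sub_cancel]
        ring
    _ ≡ 1 [MOD p] := by simp [Nat.ModEq]

end CyclicSubgroups

section Overgroups

open Subgroup

variable {G : Type*} [Group G]

theorem relIndex_comap_mk' (N : Subgroup G) [N.Normal] (L : Subgroup (G ⧸ N)) :
    N.relIndex (L.comap (QuotientGroup.mk' N)) = Nat.card L := by
  have comap_bot_eq : (⊥ : Subgroup (G ⧸ N)).comap (QuotientGroup.mk' N) = N := by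
    rw [MonoidHom.comap_bot, QuotientGroup.ker_mk']
  calc N.relIndex (L.comap (QuotientGroup.mk' N))
      = ((⊥ : Subgroup (G ⧸ N)).comap (QuotientGroup.mk' N)).relIndex
          (L.comap (QuotientGroup.mk' N)) := by rw [comap_bot_eq]
    _ = Nat.card L := by
        rw [relIndex_comap, map_comap_eq_self_of_surjective (QuotientGroup.mk'_surjective N),
          relIndex_bot_left]

theorem card_subgroup_quotient_card_eq (N : Subgroup G) [N.Normal] (m : ℕ) :
    Nat.card {L : Subgroup (G ⧸ N) // Nat.card L = m} =
      Nat.card {K : Subgroup G // N ≤ K ∧ N.relIndex K = m} :=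
  Nat.card_congr <|
    ((QuotientGroup.comapMk'OrderIso N).toEquiv.subtypeEquiv fun L ↦ by
      rw [← relIndex_comap_mk']; rfl).trans
    (Equiv.subtypeSubtypeEquivSubtypeInter (N ≤ ·) (N.relIndex · = m))

theorem card_overgroups_subgroupOf {P N : Subgroup G} (hPN : P ≤ N) (m : ℕ) :
    Nat.card {K : Subgroup N // P.subgroupOf N ≤ K ∧ (P.subgroupOf N).relIndex K = m} =
      Nat.card {K : Subgroup G // K ≤ N ∧ P ≤ K ∧ P.relIndex K = m} :=
  Nat.card_congr <|
    ((MapSubtype.orderIso N).toEquiv.subtypeEquiv fun K ↦ by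
      have map_eq : (P.subgroupOf N).map N.subtype = P := map_subgroupOf_eq_of_le hPN
      rw [← map_le_map_iff_of_injective N.subtype_injective,
        ← relIndex_map_map_of_injective _ _ N.subtype_injective, map_eq]
      rfl).trans
    (Equiv.subtypeSubtypeEquivSubtypeInter (· ≤ N) fun K ↦ P ≤ K ∧ P.relIndex K = m)

theorem le_normalizer_of_relIndex_eq_prime {p : ℕ} [hp : Fact p.Prime] {P K : Subgroup G} [Finite K]
    (hK : IsPGroup p K) (hPK : P ≤ K) (hindex : P.relIndex K = p) :
    K ≤ normalizer (P : Set G) := by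
  obtain ⟨s, hs⟩ := IsPGroup.iff_card.1 hK
  have hs0 : s ≠ 0 := by
    rintro rfl
    have p_dvd_one : p ∣ 1 := by
      simpa only [hs, hindex, pow_zero] using P.relIndex_dvd_card K
    exact hp.out.not_dvd_one p_dvd_one
  have : (P.subgroupOf K).Normal := by
    apply normal_of_index_eq_minFac_card
    rw [hs, hp.out.pow_minFac hs0]
    exact hindex
  exact le_normalizer_of_normal_subgroupOf hPK

variable {p r : ℕ} [hp : Fact p.Prime] {P : Subgroup G}

theorem relIndex_eq_prime_iff_card_eq (hP : Nat.card P = p ^ r) {K : Subgroup G} (hPK : P ≤ K) :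
    P.relIndex K = p ↔ Nat.card K = p ^ (r + 1) := by
  rw [← relIndex_bot_left K, ← relIndex_mul_relIndex ⊥ P K bot_le hPK, relIndex_bot_left, hP,
    pow_succ, Nat.mul_right_inj (pow_ne_zero r hp.out.ne_zero)]

theorem card_overgroups_modEq_one [Finite G] (hP : Nat.card P = p ^ r)
    (hdvd : p ^ (r + 1) ∣ Nat.card G) :
    Nat.card {K : Subgroup G // P ≤ K ∧ Nat.card K = p ^ (r + 1)} ≡ 1 [MOD p] := by
  have overgroup_iff (K : Subgroup G) :
      K ≤ normalizer (P : Set G) ∧ P ≤ K ∧ P.relIndex K = p ↔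
        P ≤ K ∧ Nat.card K = p ^ (r + 1) := by
    refine ⟨fun ⟨_, hPK, hindex⟩ ↦ ⟨hPK, (relIndex_eq_prime_iff_card_eq hP hPK).1 hindex⟩,
      fun ⟨hPK, hK⟩ ↦ ?_⟩
    have hindex := (relIndex_eq_prime_iff_card_eq hP hPK).2 hK
    exact ⟨le_normalizer_of_relIndex_eq_prime (IsPGroup.of_card hK) hPK hindex, hPK, hindex⟩
  rw [← Nat.card_congr (Equiv.subtypeEquivRight overgroup_iff),
    ← card_overgroups_subgroupOf le_normalizer, ← card_subgroup_quotient_card_eq]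
  exact card_subgroup_card_eq_prime_modEq_one p (Sylow.prime_dvd_card_quotient_normalizer hdvd hP)

end Overgroups

theorem monotone_fin_cons_iff {α : Type*} [Preorder α] {k : ℕ} {a : α} {f : Fin k → α} :
    Monotone (Fin.cons a f : Fin (k + 1) → α) ↔ (∀ i, a ≤ f i) ∧ Monotone f := by
  refine ⟨fun h ↦ ⟨fun i ↦ h (Fin.zero_le i.succ), fun i j hij ↦ h (Fin.succ_le_succ_iff.2 hij)⟩,
    fun ⟨ha, hf⟩ ↦ ?_⟩
  intro i j hij
  cases i using Fin.cases with
  | zero => cases j using Fin.cases with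
    | zero => exact le_rfl
    | succ j => exact ha j
  | succ i => cases j using Fin.cases with
    | zero => exact absurd hij (Fin.not_le.2 (Fin.succ_pos i))
    | succ j => exact hf (Fin.succ_le_succ_iff.1 hij)

section Chains

variable {G : Type*} [Group G]

/-- `Q 0 ≤ Q 1 ≤ ⋯` is an ascending chain of subgroups above `P` with orders
`p ^ (r + 1), p ^ (r + 2), …`, so that `Q i` is the paper's `P_{r + 1 + i}`. The order
of `P` itself is not constrained. -/
def IsPrimePowerChain (p r : ℕ) (P : Subgroup G) {k : ℕ} (Q : Fin k → Subgroup G) : Prop :=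
  Monotone Q ∧ (∀ i : Fin k, Nat.card (Q i) = p ^ (r + 1 + (i : ℕ))) ∧ ∀ i : Fin k, P ≤ Q i

variable {p r k : ℕ} {P K : Subgroup G}

theorem isPrimePowerChain_cons_iff {Q : Fin k → Subgroup G} :
    IsPrimePowerChain p r P (Fin.cons K Q : Fin (k + 1) → Subgroup G) ↔
      (P ≤ K ∧ Nat.card K = p ^ (r + 1)) ∧ IsPrimePowerChain p (r + 1) K Q := by
  simp only [IsPrimePowerChain, monotone_fin_cons_iff, Fin.forall_fin_succ, Fin.cons_zero,
    Fin.cons_succ, Fin.val_zero, Fin.val_succ, add_assoc, add_comm 1 (_ : ℕ)]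
  refine ⟨fun ⟨⟨hKQ, hQ⟩, ⟨hK, hcard⟩, hPK, _⟩ ↦ ⟨⟨hPK, hK⟩, hQ, hcard, hKQ⟩,
    fun ⟨⟨hPK, hK⟩, hQ, hcard, hKQ⟩ ↦ ⟨⟨hKQ, hQ⟩, ⟨hK, hcard⟩, hPK, fun i ↦ hPK.trans (hKQ i)⟩⟩

/-- Splits off the smallest member of a chain; the rest is a chain above that member. -/
def primePowerChainSuccEquiv (p r k : ℕ) (P : Subgroup G) :
    {Q : Fin (k + 1) → Subgroup G // IsPrimePowerChain p r P Q} ≃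
      Σ K : {K : Subgroup G // P ≤ K ∧ Nat.card K = p ^ (r + 1)},
        {Q : Fin k → Subgroup G // IsPrimePowerChain p (r + 1) K.1 Q} where
  toFun Q :=
    have h := isPrimePowerChain_cons_iff.1 ((Fin.cons_self_tail Q.1).symm ▸ Q.2)
    ⟨⟨Q.1 0, h.1⟩, ⟨Fin.tail Q.1, h.2⟩⟩
  invFun s := ⟨Fin.cons s.1.1 s.2.1, isPrimePowerChain_cons_iff.2 ⟨s.1.2, s.2.2⟩⟩
  left_inv Q := Subtype.ext (Fin.cons_self_tail Q.1)
  right_inv _ := rfl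

theorem chain_count_to_sylow_general [Finite G] [Fact p.Prime] (hdvd : p ^ (r + k) ∣ Nat.card G)
    (hP : Nat.card P = p ^ r) :
    Nat.card {Q : Fin k → Subgroup G // IsPrimePowerChain p r P Q} ≡ 1 [MOD p] := by
  induction k generalizing r P with
  | zero => simp [IsPrimePowerChain, Subsingleton.monotone, Nat.ModEq]
  | succ k ih =>
    have := Fintype.ofFinite {K : Subgroup G // P ≤ K ∧ Nat.card K = p ^ (r + 1)}
    calc Nat.card {Q : Fin (k + 1) → Subgroup G // IsPrimePowerChain p r P Q}
        = ∑ K : {K : Subgroup G // P ≤ K ∧ Nat.card K = p ^ (r + 1)},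
            Nat.card {Q : Fin k → Subgroup G // IsPrimePowerChain p (r + 1) K.1 Q} := by
          rw [Nat.card_congr (primePowerChainSuccEquiv p r k P), Nat.card_sigma]
      _ ≡ ∑ _K : {K : Subgroup G // P ≤ K ∧ Nat.card K = p ^ (r + 1)}, 1 [MOD p] :=
          Nat.ModEq.sum fun K _ ↦ ih (by rwa [add_assoc, add_comm 1 k]) K.2.2
      _ = Nat.card {K : Subgroup G // P ≤ K ∧ Nat.card K = p ^ (r + 1)} := by
          rw [Nat.card_eq_fintype_card, Fintype.card_eq_sum_ones]
      _ ≡ 1 [MOD p] := card_overgroups_modEq_one hP ((pow_dvd_pow p (by lia)).trans hdvd)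

end Chains

/-- Let `H` be a finite group with `p ^ n ∣ |H|` and `p ^ (n + 1) ∤ |H|`, let `r ≤ n`,
and let `Pr ≤ H` have order `p ^ r`. Then the number of ascending chains
`Pr ≤ P (r+1) ≤ ⋯ ≤ P n` of subgroups of `H` with `|P i| = p ^ i` is congruent to `1`
mod `p`. The tuple `(P (r+1), …, P n)` is encoded as a monotone `Q : Fin (n - r) → Subgroup H`
with `|Q i| = p ^ (r + 1 + i)`. -/
theorem chain_count_to_sylow {H : Type*} [Group H] [Fintype H] (p n r : ℕ) (hp : p.Prime)
    (hn : p ^ n ∣ Fintype.card H) (hn' : ¬ p ^ (n + 1) ∣ Fintype.card H) (hr : r ≤ n)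
    (Pr : Subgroup H) (hPr : Nat.card Pr = p ^ r) :
    Nat.card {Q : Fin (n - r) → Subgroup H //
        Monotone Q ∧ (∀ i : Fin (n - r), Nat.card (Q i) = p ^ (r + 1 + (i : ℕ))) ∧
          ∀ i : Fin (n - r), Pr ≤ Q i}
      ≡ 1 [MOD p] := by
  have : Fact p.Prime := ⟨hp⟩
  exact chain_count_to_sylow_general
    (by rwa [Nat.add_sub_cancel' hr, Nat.card_eq_fintype_card]) hPr
end
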